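/- Let s ≥ 1 and in ℝ^s set P_i := conv(0, e_i) for i = 1,…,s and P_{s+i} := conv(0, −e_i) for i = 1,…,s. Then P_1 + ⋯ + P_{2s} = [−1,1]^s is reflexive, and the Cayley polytope P_1 * ⋯ * P_{2s} is a Gorenstein polytope of dimension 3s−1 and degree s that is not a lattice pyramid. -/

import Mathlib

open Pointwise

/-- A point of `ℝ^d` is a lattice point if all its coordinates are integers. -/
def IsLatticePt {d : ℕ} (x : Fin d → ℝ) : Prop := ∀ i, ∃ z : ℤ, x i = (z : ℝ)

/-- A lattice polytope is the (non-empty) convex hull of finitely many lattice points. -/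
def IsLatticePolytope {d : ℕ} (P : Set (Fin d → ℝ)) : Prop :=
  ∃ V : Finset (Fin d → ℝ), V.Nonempty ∧ (∀ v ∈ V, IsLatticePt v) ∧
    P = convexHull ℝ (V : Set (Fin d → ℝ))

/-- The dimension of a polytope: the dimension of the direction of its affine hull. -/
noncomputable def polyDim {d : ℕ} (P : Set (Fin d → ℝ)) : ℕ :=
  Module.finrank ℝ (affineSpan ℝ P).direction

/-- A polytope is hollow if its relative interior contains no lattice point. -/
def IsHollow {d : ℕ} (P : Set (Fin d → ℝ)) : Prop :=
  ∀ x ∈ intrinsicInterior ℝ P, ¬ IsLatticePt x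

/-- A facet of `P`: a non-empty exposed face of dimension `dim P - 1`. -/
def IsFacet {d : ℕ} (P F : Set (Fin d → ℝ)) : Prop :=
  IsExposed ℝ P F ∧ F.Nonempty ∧ polyDim F + 1 = polyDim P

/-- An affine functional is integral on `P` if it takes integer values on all
lattice points of the affine hull of `P`. -/
def IsIntegralOn {d : ℕ} (P : Set (Fin d → ℝ)) (u : (Fin d → ℝ) →ᵃ[ℝ] ℝ) : Prop :=
  ∀ y ∈ affineSpan ℝ P, IsLatticePt y → ∃ z : ℤ, u y = (z : ℝ)

/-- `P` is reflexive: there is a lattice point `x` in the relative interior of `P`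
such that every facet of `P` has lattice distance one from `x`, i.e. for every facet `F`
there is an integral affine functional that is constant on `F` and exceeds its value
at `x` by exactly `1`. -/
def IsReflexivePolytope {d : ℕ} (P : Set (Fin d → ℝ)) : Prop :=
  ∃ x ∈ intrinsicInterior ℝ P, IsLatticePt x ∧
    ∀ F : Set (Fin d → ℝ), IsFacet P F →
      ∃ u : (Fin d → ℝ) →ᵃ[ℝ] ℝ, IsIntegralOn P u ∧ ∀ f ∈ F, u f = u x + 1

/-- `P` is Gorenstein if some positive integer multiple `r • P` is reflexive. -/
def IsGorenstein {d : ℕ} (P : Set (Fin d → ℝ)) : Prop :=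
  ∃ r : ℕ, 0 < r ∧ IsReflexivePolytope ((r : ℝ) • P)

/-- `P` is Gorenstein of codegree `r` if `r • P` is reflexive (`r` positive). -/
def IsGorensteinOfCodeg {d : ℕ} (P : Set (Fin d → ℝ)) (r : ℕ) : Prop :=
  0 < r ∧ IsReflexivePolytope ((r : ℝ) • P)

/-- The codegree of `P`: the smallest positive integer `r` such that `r • P` is not hollow. -/
noncomputable def polyCodeg {d : ℕ} (P : Set (Fin d → ℝ)) : ℕ :=
  sInf {r : ℕ | 0 < r ∧ ¬ IsHollow ((r : ℝ) • P)}

/-- The degree of `P`: `dim P + 1 - codeg P`. -/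
noncomputable def polyDeg {d : ℕ} (P : Set (Fin d → ℝ)) : ℕ :=
  polyDim P + 1 - polyCodeg P

/-- Unimodular equivalence of lattice polytopes: an affine map carrying `P` onto `Q`,
with an affine inverse on affine hulls, such that both maps preserve lattice points of
the affine hulls. -/
def LatticeIso {d e : ℕ} (P : Set (Fin d → ℝ)) (Q : Set (Fin e → ℝ)) : Prop :=
  ∃ (f : (Fin d → ℝ) →ᵃ[ℝ] (Fin e → ℝ)) (g : (Fin e → ℝ) →ᵃ[ℝ] (Fin d → ℝ)),
    f '' P = Q ∧ g '' Q = P ∧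
    (∀ x ∈ affineSpan ℝ P, g (f x) = x) ∧ (∀ y ∈ affineSpan ℝ Q, f (g y) = y) ∧
    (∀ x ∈ affineSpan ℝ P, IsLatticePt x → IsLatticePt (f x)) ∧
    (∀ y ∈ affineSpan ℝ Q, IsLatticePt y → IsLatticePt (g y))

/-- The lattice pyramid `conv(P' × {0}, (0,1))` over `P' ⊆ ℝ^m`. -/
def pyramidOver {m : ℕ} (P' : Set (Fin m → ℝ)) : Set (Fin (m + 1) → ℝ) :=
  convexHull ℝ ((fun x => Fin.snoc x (0 : ℝ)) '' P' ∪ {Fin.snoc (0 : Fin m → ℝ) (1 : ℝ)})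

/-- `P` is a lattice pyramid if it is a single lattice point or is isomorphic to a
lattice pyramid over a lattice polytope. -/
def IsLatticePyramid {d : ℕ} (P : Set (Fin d → ℝ)) : Prop :=
  (∃ x : Fin d → ℝ, IsLatticePt x ∧ P = {x}) ∨
  ∃ (m : ℕ) (P' : Set (Fin m → ℝ)), IsLatticePolytope P' ∧ LatticeIso P (pyramidOver P')

/-- The Cayley polytope `P_1 * ⋯ * P_l ⊆ ℝ^{n+l}` of `P_1, …, P_l ⊆ ℝ^n`:
the convex hull of the sets `P_i × {e_i}`. -/
def cayley {n l : ℕ} (P : Fin l → Set (Fin n → ℝ)) : Set (Fin (n + l) → ℝ) :=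
  convexHull ℝ (⋃ i : Fin l, (fun x => Fin.append x (Pi.single i (1 : ℝ))) '' P i)

/-- The Cayley polytope `F * G ⊆ ℝ^{n+2}` of two polytopes `F, G ⊆ ℝ^n`. -/
def cayleyTwo {n : ℕ} (F G : Set (Fin n → ℝ)) : Set (Fin (n + 2) → ℝ) :=
  convexHull ℝ
    ((fun x => Fin.append x ![(1 : ℝ), 0]) '' F ∪ (fun x => Fin.append x ![(0 : ℝ), 1]) '' G)

/-- `P` is a Cayley join of `F` and `G` if `P ≅ F * G` and `dim F + dim G = dim P - 1`. -/
def IsCayleyJoin {d n : ℕ} (P : Set (Fin d → ℝ)) (F G : Set (Fin n → ℝ)) : Prop :=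
  LatticeIso P (cayleyTwo F G) ∧ polyDim F + polyDim G + 1 = polyDim P

/-- `P` is reducible with factors `F` and `G`: a Cayley join with
`codeg F + codeg G = codeg P`. -/
def IsReducibleWith {d n : ℕ} (P : Set (Fin d → ℝ)) (F G : Set (Fin n → ℝ)) : Prop :=
  IsCayleyJoin P F G ∧ polyCodeg F + polyCodeg G = polyCodeg P

/-- `P` is reducible: it is a single lattice point (by convention) or is reducible
with some factors `F` and `G` which are lattice polytopes. -/
def IsReducible {d : ℕ} (P : Set (Fin d → ℝ)) : Prop :=
  (∃ x : Fin d → ℝ, IsLatticePt x ∧ P = {x}) ∨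
  ∃ (n : ℕ) (F G : Set (Fin n → ℝ)), IsLatticePolytope F ∧ IsLatticePolytope G ∧
    IsReducibleWith P F G

/-- `P` is a Cayley polytope: a single lattice point, or isomorphic to a Cayley polytope
of `l > 1` lattice polytopes. -/
def IsCayleyPolytope {d : ℕ} (P : Set (Fin d → ℝ)) : Prop :=
  (∃ x : Fin d → ℝ, IsLatticePt x ∧ P = {x}) ∨
  ∃ (n l : ℕ) (Q : Fin l → Set (Fin n → ℝ)), 1 < l ∧ (∀ i, IsLatticePolytope (Q i)) ∧
    LatticeIso P (cayley Q)

/-- `P` is IDP if for every `k ≥ 2` every lattice point of `k • P` is a sum of `k`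
lattice points of `P`. -/
def IsIDP {d : ℕ} (P : Set (Fin d → ℝ)) : Prop :=
  ∀ k : ℕ, 2 ≤ k → ∀ x : Fin d → ℝ, IsLatticePt x → x ∈ (k : ℝ) • P →
    ∃ p : Fin k → (Fin d → ℝ), (∀ i, p i ∈ P ∧ IsLatticePt (p i)) ∧ x = ∑ i, p i

/-- The standard simplex `Δ_s = conv(0, e_1, …, e_s) ⊆ ℝ^s`. -/
def stdSimplexLP (s : ℕ) : Set (Fin s → ℝ) :=
  convexHull ℝ (insert 0 (Set.range fun i : Fin s => Pi.single i (1 : ℝ)))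

/-- The product of `F ⊆ ℝ^m` and `G ⊆ ℝ^n` inside `ℝ^{m+n}`. -/
def prodPoly {m n : ℕ} (F : Set (Fin m → ℝ)) (G : Set (Fin n → ℝ)) : Set (Fin (m + n) → ℝ) :=
  (fun p : (Fin m → ℝ) × (Fin n → ℝ) => Fin.append p.1 p.2) '' (F ×ˢ G)

/-- The free join `conv(F × 0 × {0} ∪ 0 × G × {1}) ⊆ ℝ^m × ℝ^n × ℝ`. -/
def freeJoin {m n : ℕ} (F : Set (Fin m → ℝ)) (G : Set (Fin n → ℝ)) :
    Set (Fin (m + n + 1) → ℝ) :=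
  convexHull ℝ
    ((fun x => Fin.snoc (Fin.append x (0 : Fin n → ℝ)) (0 : ℝ)) '' F ∪
     (fun y => Fin.snoc (Fin.append (0 : Fin m → ℝ) y) (1 : ℝ)) '' G)

/-- For `i < s`, the segment `conv(0, e_i) ⊆ ℝ^s`; for `s ≤ i < 2s`, the segment
`conv(0, -e_{i-s}) ⊆ ℝ^s`. -/
noncomputable def segPM (s : ℕ) (i : Fin (2 * s)) : Set (Fin s → ℝ) :=
  if h : (i : ℕ) < s then segment ℝ 0 (Pi.single (⟨(i : ℕ), h⟩ : Fin s) (1 : ℝ))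
  else segment ℝ 0 (-(Pi.single (⟨(i : ℕ) - s, by have := i.isLt; omega⟩ : Fin s) (1 : ℝ)))

/-!
Every facet of a polyhedron lies in the zero set of one of the functionals defining it. So if these
functionals are integral and all take the value `1` at some lattice point, then this point has
lattice distance one from every facet and the polyhedron is reflexive.

For a Cayley polytope, `r • (P₁ * ⋯ * Pₗ)` consists of the points `(x, c)` with `c ≥ 0`, `∑ cᵢ = r`
and `x ∈ ∑ cᵢ Pᵢ`. If the `Pᵢ` are the segments from `0` to `vᵢ = ±e_k`, then `∑ cᵢ Pᵢ` is the box
`vᵢ ⬝ x ≤ cᵢ`, so for `r = 2s` the functionals `cᵢ` and `cᵢ - vᵢ ⬝ x` all equal `1` at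
`(0, (1, …, 1))`. No smaller multiple has a relative interior lattice point, since there the `cᵢ`
are `2s` positive integers with sum `r`. Finally, if `vⱼ = -vᵢ`, the vertices satisfy
`(0, eᵢ) + (0, eⱼ) = (vᵢ, eᵢ) + (vⱼ, eⱼ)`, whereas the apex of a pyramid takes part in no such
relation.
-/

section Polyhedron

variable {E ι : Type*} [AddCommGroup E] [Module ℝ E]

/-- The polyhedron cut out of the affine subspace `A` by the inequalities `0 ≤ a j`. Keeping `A`
separate from the inequalities lets a point at which all `a j` are positive be a relative interior
point. -/
def polyhedron (A : AffineSubspace ℝ E) (a : ι → E →ᵃ[ℝ] ℝ) : Set E :=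
  {y | y ∈ A ∧ ∀ j, 0 ≤ a j y}

variable {A : AffineSubspace ℝ E} {a : ι → E →ᵃ[ℝ] ℝ} {x : E}

theorem convex_polyhedron (A : AffineSubspace ℝ E) (a : ι → E →ᵃ[ℝ] ℝ) :
    Convex ℝ (polyhedron A a) := by
  have h : polyhedron A a = (A : Set E) ∩ ⋂ j, a j ⁻¹' Set.Ici 0 := by
    ext y
    simp [polyhedron]
  rw [h]
  exact A.convex.inter (convex_iInter fun j => (convex_Ici 0).affine_preimage (a j))

open Filter Topology in
theorem affineSpan_polyhedron [Finite ι] (hxA : x ∈ A) (hx : ∀ j, 0 < a j x) :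
    affineSpan ℝ (polyhedron A a) = A := by
  refine le_antisymm (affineSpan_le.2 fun y hy => hy.1) fun y hy => ?_
  have hxP : x ∈ polyhedron A a := ⟨hxA, fun j => (hx j).le⟩
  have h_near : ∀ᶠ t : ℝ in 𝓝[≠] 0, ∀ j, 0 < a j (AffineMap.lineMap x y t) := by
    refine eventually_all.2 fun j => eventually_nhdsWithin_of_eventually_nhds ?_
    have h_cont : Continuous fun t : ℝ => a j (AffineMap.lineMap x y t) := by
      simp only [AffineMap.apply_lineMap]
      exact AffineMap.lineMap_continuous
    exact h_cont.tendsto 0 |>.eventually_const_lt (by simpa using hx j)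
  obtain ⟨t, ht, ht0⟩ := (h_near.and self_mem_nhdsWithin).exists
  have hz : AffineMap.lineMap x y t ∈ polyhedron A a :=
    ⟨AffineMap.lineMap_mem t hxA hy, fun j => (ht j).le⟩
  have hy_eq : y = AffineMap.lineMap x (AffineMap.lineMap x y t) t⁻¹ := by
    rw [AffineMap.lineMap_lineMap_right, inv_mul_cancel₀ ht0, AffineMap.lineMap_apply_one]
  rw [hy_eq]
  exact AffineMap.lineMap_mem _ (subset_affineSpan ℝ _ hxP) (subset_affineSpan ℝ _ hz)

theorem mem_intrinsicInterior_polyhedron {E : Type*} [NormedAddCommGroup E] [NormedSpace ℝ E]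
    [FiniteDimensional ℝ E] [Finite ι] {A : AffineSubspace ℝ E} {a : ι → E →ᵃ[ℝ] ℝ} {x : E}
    (hxA : x ∈ A) (hx : ∀ j, 0 < a j x) : x ∈ intrinsicInterior ℝ (polyhedron A a) := by
  have h_span := affineSpan_polyhedron hxA hx
  have hx_span : x ∈ affineSpan ℝ (polyhedron A a) := by rwa [h_span]
  refine mem_intrinsicInterior.2 ⟨⟨x, hx_span⟩, mem_interior.2 ?_, rfl⟩
  refine ⟨⋂ j, {z | 0 < a j z}, fun z hz => ?_, ?_, Set.mem_iInter.2 hx⟩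
  · exact ⟨h_span.le z.2, fun j => (Set.mem_iInter.1 hz j).le⟩
  · exact isOpen_iInter_of_finite fun j => isOpen_lt continuous_const
      ((AffineMap.continuous_of_finiteDimensional (a j)).comp continuous_subtype_val)

variable [TopologicalSpace E] [IsTopologicalAddGroup E] [ContinuousSMul ℝ E]

variable {P : Set E}

-- A functional vanishing at `x` would become negative when moving from `x` away from `y`.
open Filter Topology in
theorem pos_of_mem_intrinsicInterior {l : E →ᵃ[ℝ] ℝ} (hl : ∀ y ∈ P, 0 ≤ l y)
    (hx : x ∈ intrinsicInterior ℝ P) {y : E} (hy : y ∈ P) (hly : 0 < l y) : 0 < l x := by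
  obtain ⟨x, hx_int, rfl⟩ := mem_intrinsicInterior.1 hx
  have h_mem (t : ℝ) : AffineMap.lineMap (x : E) y t ∈ affineSpan ℝ P :=
    AffineMap.lineMap_mem t x.2 (subset_affineSpan ℝ P hy)
  have h_cont : Continuous fun t : ℝ =>
      (⟨AffineMap.lineMap (x : E) y t, h_mem t⟩ : affineSpan ℝ P) :=
    AffineMap.lineMap_continuous.subtype_mk h_mem
  have h_near : ∀ᶠ t : ℝ in 𝓝[<] 0, AffineMap.lineMap (x : E) y t ∈ P := by
    have hx_nhds : (↑) ⁻¹' P ∈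
        𝓝 (⟨AffineMap.lineMap (x : E) y (0 : ℝ), h_mem 0⟩ : affineSpan ℝ P) := by
      simpa using mem_interior_iff_mem_nhds.1 hx_int
    exact eventually_nhdsWithin_of_eventually_nhds (h_cont.tendsto 0 hx_nhds)
  obtain ⟨t, ht, ht0⟩ := (h_near.and self_mem_nhdsWithin).exists
  have h_nonneg : 0 ≤ (1 - t) * l x + t * l y := by
    simpa [AffineMap.apply_lineMap, AffineMap.lineMap_apply_ring] using hl _ ht
  nlinarith [show t < 0 from ht0]

theorem eq_of_isExposed_of_mem_intrinsicInterior {F : Set E} (hF : IsExposed ℝ P F) (hxF : x ∈ F)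
    (hx : x ∈ intrinsicInterior ℝ P) : F = P := by
  obtain ⟨L, rfl⟩ := hF ⟨x, hxF⟩
  refine hF.subset.antisymm fun y hy => ⟨hy, fun z hz => (hxF.2 z hz).trans ?_⟩
  let gap : E →ᵃ[ℝ] ℝ := AffineMap.const ℝ E (L x) - (L : E →ₗ[ℝ] ℝ).toAffineMap
  have h_gap (w : E) : gap w = L x - L w := rfl
  by_contra! hlt
  have h_pos : 0 < gap x := pos_of_mem_intrinsicInterior
    (fun w hw => sub_nonneg.2 (hxF.2 w hw)) hx hy (sub_pos.2 hlt)
  simp [h_gap] at h_pos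

end Polyhedron

section Reflexive

variable {d : ℕ} {ι : Type*} [Finite ι] {A : AffineSubspace ℝ (Fin d → ℝ)}
  {a : ι → (Fin d → ℝ) →ᵃ[ℝ] ℝ} {x : Fin d → ℝ}

theorem polyDim_polyhedron (hxA : x ∈ A) (hx : ∀ j, 0 < a j x) :
    polyDim (polyhedron A a) = Module.finrank ℝ A.direction := by
  rw [polyDim, affineSpan_polyhedron hxA hx]

theorem IsFacet.exists_forall_eq_zero {F : Set (Fin d → ℝ)} (hF : IsFacet (polyhedron A a) F) :
    ∃ j, ∀ y ∈ F, a j y = 0 := by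
  obtain ⟨h_exposed, h_ne, h_dim⟩ := hF
  have hFP : F ⊆ polyhedron A a := h_exposed.subset
  obtain ⟨x, hx⟩ := h_ne.intrinsicInterior (h_exposed.convex (convex_polyhedron A a))
  have hxF : x ∈ F := intrinsicInterior_subset hx
  by_contra! h_slack
  have hx_pos (j : ι) : 0 < a j x := by
    obtain ⟨y, hy, hy0⟩ := h_slack j
    exact pos_of_mem_intrinsicInterior (fun z hz => (hFP hz).2 j) hx hy
      (((hFP hy).2 j).lt_of_ne' hy0)
  have hF_eq : F = polyhedron A a := eq_of_isExposed_of_mem_intrinsicInterior h_exposed hxF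
    (mem_intrinsicInterior_polyhedron (hFP hxF).1 hx_pos)
  rw [hF_eq] at h_dim
  lia

theorem isReflexivePolytope_polyhedron (hxA : x ∈ A) (hx : IsLatticePt x) (hax : ∀ j, a j x = 1)
    (ha : ∀ j, IsIntegralOn (polyhedron A a) (a j)) :
    IsReflexivePolytope (polyhedron A a) := by
  refine ⟨x, mem_intrinsicInterior_polyhedron hxA fun j => by simp [hax j], hx, fun F hF => ?_⟩
  obtain ⟨j, hj⟩ := hF.exists_forall_eq_zero
  refine ⟨-a j, fun y hy hy_int => ?_, fun y hy => by simp [hj y hy, hax j]⟩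
  obtain ⟨z, hz⟩ := ha j y hy hy_int
  exact ⟨-z, by simp [hz]⟩

theorem IsReflexivePolytope.not_isHollow {P : Set (Fin d → ℝ)} (hP : IsReflexivePolytope P) :
    ¬ IsHollow P := by
  obtain ⟨x, hx, hx_int, -⟩ := hP
  exact fun h => h x hx hx_int

theorem polyDim_smul {r : ℝ} (hr : r ≠ 0) (P : Set (Fin d → ℝ)) :
    polyDim (r • P) = polyDim P := by
  have h_span : vectorSpan ℝ (r • P) = vectorSpan ℝ P := by
    have h_image : r • P = (r • LinearMap.id : (Fin d → ℝ) →ₗ[ℝ] _).toAffineMap '' P := rfl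
    rw [h_image, ← AffineMap.map_vectorSpan, LinearMap.toAffineMap_linear,
      Submodule.map_smul _ _ _ hr, Submodule.map_id]
  rw [polyDim, polyDim, direction_affineSpan, direction_affineSpan, h_span]

end Reflexive

section Lattice

variable {n l : ℕ} {x y : Fin n → ℝ} {c : Fin l → ℝ}

theorem isLatticePt_zero : IsLatticePt (0 : Fin n → ℝ) := fun _ => ⟨0, by simp⟩

theorem isLatticePt_one : IsLatticePt (1 : Fin n → ℝ) := fun _ => ⟨1, by simp⟩

theorem isLatticePt_single_one (i : Fin n) : IsLatticePt (Pi.single i (1 : ℝ)) := fun k => by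
  obtain rfl | hk := eq_or_ne k i
  · exact ⟨1, by simp⟩
  · exact ⟨0, by simp [hk]⟩

theorem IsLatticePt.neg (hx : IsLatticePt x) : IsLatticePt (-x) := fun i => by
  obtain ⟨z, hz⟩ := hx i
  exact ⟨-z, by simp [hz]⟩

theorem isLatticePt_append : IsLatticePt (Fin.append x c) ↔ IsLatticePt x ∧ IsLatticePt c := by
  simp [IsLatticePt, Fin.forall_fin_add]

theorem IsLatticePt.exists_int_eq_dotProduct (hx : IsLatticePt x) (hy : IsLatticePt y) :
    ∃ z : ℤ, x ⬝ᵥ y = z := by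
  choose a ha using hx
  choose b hb using hy
  exact ⟨a ⬝ᵥ b, by simp [dotProduct, ha, hb]⟩

/-- Concatenation as a linear equivalence `ℝⁿ × ℝˡ ≃ ℝⁿ⁺ˡ`: the splitting of the space in which a
Cayley polytope lives. -/
def appendLinearEquiv (n l : ℕ) : ((Fin n → ℝ) × (Fin l → ℝ)) ≃ₗ[ℝ] (Fin (n + l) → ℝ) where
  __ := Fin.appendEquiv n l
  map_add' p q := by
    ext k
    induction k using Fin.addCases <;> simp
  map_smul' r p := by
    ext k
    induction k using Fin.addCases <;> simp

@[simp]
theorem appendLinearEquiv_apply (p : (Fin n → ℝ) × (Fin l → ℝ)) :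
    appendLinearEquiv n l p = Fin.append p.1 p.2 := rfl

@[simp]
theorem appendLinearEquiv_symm_append (x : Fin n → ℝ) (c : Fin l → ℝ) :
    (appendLinearEquiv n l).symm (Fin.append x c) = (x, c) :=
  (appendLinearEquiv n l).symm_apply_apply (x, c)

end Lattice

section Cayley

variable {n l : ℕ} {P : Fin l → Set (Fin n → ℝ)}

theorem append_single_mem_cayley (i : Fin l) {x : Fin n → ℝ} (hx : x ∈ P i) :
    Fin.append x (Pi.single i 1) ∈ cayley P :=
  subset_convexHull ℝ _ (Set.mem_iUnion_of_mem i ⟨x, hx, rfl⟩)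

theorem convex_setOf_mem_sum_smul (hP : ∀ i, Convex ℝ (P i)) :
    Convex ℝ {p : (Fin n → ℝ) × (Fin l → ℝ) |
      (∀ i, 0 ≤ p.2 i) ∧ ∑ i, p.2 i = 1 ∧ p.1 ∈ ∑ i, p.2 i • P i} := by
  rintro ⟨x, c⟩ ⟨hc, hc1, hx⟩ ⟨y, d⟩ ⟨hd, hd1, hy⟩ a b ha hb hab
  refine ⟨fun i => add_nonneg (mul_nonneg ha (hc i)) (mul_nonneg hb (hd i)), ?_, ?_⟩
  · simp [Finset.sum_add_distrib, ← Finset.mul_sum, hc1, hd1, hab]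
  · have h_sum : ∑ i, (a * c i + b * d i) • P i = a • ∑ i, c i • P i + b • ∑ i, d i • P i := by
      simp only [Finset.smul_sum, smul_smul, ← Finset.sum_add_distrib]
      exact Finset.sum_congr rfl fun i _ =>
        (hP i).add_smul (mul_nonneg ha (hc i)) (mul_nonneg hb (hd i))
    change a • x + b • y ∈ ∑ i, (a * c i + b * d i) • P i
    rw [h_sum]
    exact Set.add_mem_add (Set.smul_mem_smul_set hx) (Set.smul_mem_smul_set hy)

theorem append_mem_cayley (hP : ∀ i, Convex ℝ (P i)) (hne : ∀ i, (P i).Nonempty)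
    {x : Fin n → ℝ} {c : Fin l → ℝ} :
    Fin.append x c ∈ cayley P ↔ (∀ i, 0 ≤ c i) ∧ ∑ i, c i = 1 ∧ x ∈ ∑ i, c i • P i := by
  constructor
  · intro h
    have h_sub : cayley P ⊆ (appendLinearEquiv n l).symm ⁻¹' {p |
        (∀ i, 0 ≤ p.2 i) ∧ ∑ i, p.2 i = 1 ∧ p.1 ∈ ∑ i, p.2 i • P i} := by
      refine convexHull_min (Set.iUnion_subset fun i => ?_)
        ((convex_setOf_mem_sum_smul hP).linear_preimage (appendLinearEquiv n l).symm.toLinearMap)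
      rintro _ ⟨y, hy, rfl⟩
      have h_sum : ∑ j, (Pi.single i 1 : Fin l → ℝ) j • P j = P i := by
        rw [Finset.sum_eq_single i (fun j _ hj => by simp [hj, Set.zero_smul_set (hne j)])
          (by simp), Pi.single_eq_same, one_smul]
      have h_nonneg : 0 ≤ (Pi.single i 1 : Fin l → ℝ) := Pi.single_nonneg.2 zero_le_one
      simpa [h_sum] using ⟨h_nonneg, hy⟩
    simpa using h_sub h
  · rintro ⟨hc, hc1, hx⟩
    obtain ⟨g, hg, rfl⟩ := (Set.mem_fintype_sum _ _).1 hx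
    choose p hp hpg using hg
    have h_eq : Fin.append (∑ i, g i) c = ∑ i, c i • Fin.append (p i) (Pi.single i 1) := by
      have h_pair : (∑ i, g i, c) = ∑ i, c i • (p i, Pi.single i (1 : ℝ)) :=
        Prod.ext (by simp [Prod.fst_sum, hpg]) (by simpa [Prod.snd_sum] using pi_eq_sum_univ' c)
      simpa only [map_sum, map_smul, appendLinearEquiv_apply] using
        congrArg (appendLinearEquiv n l) h_pair
    rw [h_eq]
    exact (convex_convexHull ℝ _).sum_mem (fun i _ => hc i) hc1
      fun i _ => append_single_mem_cayley i (hp i)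

theorem append_mem_smul_cayley (hP : ∀ i, Convex ℝ (P i)) (hne : ∀ i, (P i).Nonempty) {r : ℝ}
    (hr : 0 < r) {x : Fin n → ℝ} {c : Fin l → ℝ} :
    Fin.append x c ∈ r • cayley P ↔ (∀ i, 0 ≤ c i) ∧ ∑ i, c i = r ∧ x ∈ ∑ i, c i • P i := by
  have h_smul : r⁻¹ • Fin.append x c = Fin.append (r⁻¹ • x) (r⁻¹ • c) :=
    ((appendLinearEquiv n l).map_smul r⁻¹ (x, c)).symm
  have h_sum : ∑ i, (r⁻¹ • c) i • P i = r⁻¹ • ∑ i, c i • P i := by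
    simp [Finset.smul_sum, smul_smul]
  rw [Set.mem_smul_set_iff_inv_smul_mem₀ hr.ne', h_smul, append_mem_cayley hP hne, h_sum,
    Set.smul_mem_smul_set_iff₀ (inv_ne_zero hr.ne')]
  simp only [Pi.smul_apply, smul_eq_mul, ← Finset.mul_sum]
  rw [inv_mul_eq_one₀ hr.ne', eq_comm]
  simp [hr]

/-- The linear functional on `ℝⁿ⁺ˡ` summing the last `l` coordinates; it takes the value `r` on the
`r`-th dilate of a Cayley polytope of `l` polytopes in `ℝⁿ`. -/
def cayleyHeight (n l : ℕ) : (Fin (n + l) → ℝ) →ₗ[ℝ] ℝ :=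
  ∑ i, LinearMap.proj (Fin.natAdd n i)

@[simp]
theorem cayleyHeight_append (x : Fin n → ℝ) (c : Fin l → ℝ) :
    cayleyHeight n l (Fin.append x c) = ∑ i, c i := by
  simp [cayleyHeight]

theorem finrank_ker_cayleyHeight (hl : l ≠ 0) :
    Module.finrank ℝ (LinearMap.ker (cayleyHeight n l)) = n + l - 1 := by
  have h_ne : cayleyHeight n l ≠ 0 := fun h => by
    have h_one : cayleyHeight n l (Fin.append 0 1) = l := by simp
    rw [h, LinearMap.zero_apply] at h_one
    exact hl (by exact_mod_cast h_one.symm)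
  have h_ker := Module.Dual.finrank_ker_add_one_of_ne_zero (K := ℝ) h_ne
  simp only [Module.finrank_fin_fun] at h_ker
  lia

-- At a lattice point of the relative interior all `l` of the coordinates that sum to `r` are
-- positive integers.
theorem le_of_not_isHollow_smul_cayley (hP : ∀ i, Convex ℝ (P i)) (hne : ∀ i, (P i).Nonempty)
    {r : ℕ} (hr : 0 < r) (h : ¬ IsHollow ((r : ℝ) • cayley P)) : l ≤ r := by
  have hr0 : (0 : ℝ) < r := by exact_mod_cast hr
  simp only [IsHollow, not_forall, not_not] at h
  obtain ⟨y, hy, hy_int⟩ := h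
  obtain ⟨⟨x, c⟩, rfl⟩ := (appendLinearEquiv n l).surjective y
  simp only [appendLinearEquiv_apply] at hy hy_int
  have h_coord (i : Fin l) : ∃ y ∈ (r : ℝ) • cayley P, 0 < y (Fin.natAdd n i) := by
    obtain ⟨p, hp⟩ := hne i
    exact ⟨_, Set.smul_mem_smul_set (append_single_mem_cayley i hp), by simpa using hr⟩
  have h_nonneg (i : Fin l) (y) (hy : y ∈ (r : ℝ) • cayley P) : 0 ≤ y (Fin.natAdd n i) := by
    obtain ⟨⟨x, c⟩, rfl⟩ := (appendLinearEquiv n l).surjective y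
    simpa using ((append_mem_smul_cayley hP hne hr0).1 hy).1 i
  have hc (i : Fin l) : 1 ≤ c i := by
    obtain ⟨p, hp, hp_pos⟩ := h_coord i
    have hc_pos : 0 < c i := by
      simpa using pos_of_mem_intrinsicInterior
        (l := (LinearMap.proj (R := ℝ) (φ := fun _ => ℝ) (Fin.natAdd n i)).toAffineMap)
        (h_nonneg i) hy hp hp_pos
    obtain ⟨z, hz⟩ := hy_int (Fin.natAdd n i)
    rw [Fin.append_right] at hz
    rw [hz] at hc_pos ⊢
    exact_mod_cast hc_pos
  have h_sum : ∑ i, c i = r :=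
    ((append_mem_smul_cayley hP hne hr0).1 (intrinsicInterior_subset hy)).2.1
  have h_card : (l : ℝ) ≤ ∑ i, c i := by
    simpa using Finset.card_nsmul_le_sum Finset.univ c 1 fun i _ => hc i
  rw [h_sum] at h_card
  exact_mod_cast h_card

theorem polyCodeg_cayley (hP : ∀ i, Convex ℝ (P i)) (hne : ∀ i, (P i).Nonempty)
    (h : IsGorensteinOfCodeg (cayley P) l) : polyCodeg (cayley P) = l :=
  IsLeast.csInf_eq ⟨⟨h.1, h.2.not_isHollow⟩, fun _ hr =>
    le_of_not_isHollow_smul_cayley hP hne hr.1 hr.2⟩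

theorem cayley_convexHull (V : Fin l → Set (Fin n → ℝ)) :
    cayley (fun i => convexHull ℝ (V i)) =
      convexHull ℝ (⋃ i, (fun x => Fin.append x (Pi.single i (1 : ℝ))) '' V i) := by
  refine (convexHull_min (Set.iUnion_subset fun i => ?_) (convex_convexHull ℝ _)).antisymm
    (convexHull_mono (Set.iUnion_mono fun i => Set.image_mono (subset_convexHull ℝ _)))
  have h_affine : (fun x : Fin n → ℝ => Fin.append x (Pi.single i (1 : ℝ))) =
      (appendLinearEquiv n l).toLinearMap.toAffineMap.comp
        ((AffineMap.id ℝ _).prod (AffineMap.const ℝ _ (Pi.single i 1))) := rfl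
  rw [h_affine, AffineMap.image_convexHull, ← h_affine]
  exact convexHull_mono
    (Set.subset_iUnion (fun i => (fun x => Fin.append x (Pi.single i (1 : ℝ))) '' V i) i)

end Cayley

section Pyramid

variable {d : ℕ}

theorem exists_mem_segment_of_mem_pyramidOver {m : ℕ} {Q : Set (Fin m → ℝ)} (hQ : Q.Nonempty)
    {y : Fin (m + 1) → ℝ} (hy : y ∈ pyramidOver Q) :
    ∃ p : Fin (m + 1) → ℝ, p (Fin.last m) = 0 ∧ y ∈ segment ℝ p (Fin.snoc 0 1) := by
  rw [pyramidOver, Set.union_singleton, convexHull_insert (hQ.image _),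
    convexJoin_singleton_left] at hy
  obtain ⟨p, hp, hyp⟩ := Set.mem_iUnion₂.1 hy
  refine ⟨p, ?_, segment_symm ℝ _ p ▸ hyp⟩
  have h_base : convexHull ℝ ((fun x => Fin.snoc x (0 : ℝ)) '' Q) ⊆
      (LinearMap.proj (Fin.last m) : (Fin (m + 1) → ℝ) →ₗ[ℝ] ℝ) ⁻¹' {0} :=
    convexHull_min (Set.image_subset_iff.2 fun x _ => by simp)
      ((convex_singleton 0).linear_preimage _)
  exact h_base hp

theorem IsLatticePyramid.exists_height {P : Set (Fin d → ℝ)} (hP : IsLatticePyramid P) :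
    ∃ apex ∈ P, ∃ h : (Fin d → ℝ) →ᵃ[ℝ] ℝ, IsIntegralOn P h ∧ h apex = 1 ∧
      ∀ y ∈ P, h y ∈ Set.Icc 0 1 ∧ (h y = 1 → y = apex) := by
  obtain ⟨x, -, rfl⟩ | ⟨m, Q, ⟨V, hV, -, rfl⟩, f, g, hfP, hgQ, hgf, hfg, hf_int, -⟩ := hP
  · exact ⟨x, rfl, AffineMap.const ℝ _ 1, fun _ _ _ => ⟨1, by simp⟩, by simp, by simp⟩
  have h_apex : Fin.snoc 0 1 ∈ pyramidOver (convexHull ℝ (V : Set (Fin m → ℝ))) :=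
    subset_convexHull ℝ _ (Or.inr rfl)
  refine ⟨g (Fin.snoc 0 1), hgQ ▸ Set.mem_image_of_mem g h_apex,
    (LinearMap.proj (R := ℝ) (φ := fun _ => ℝ) (Fin.last m)).toAffineMap.comp f,
    fun y hy hy_int => hf_int y hy hy_int (Fin.last m), ?_, fun y hy => ?_⟩
  · simp [hfg _ (subset_affineSpan ℝ _ h_apex)]
  · obtain ⟨p, hp, a, b, ha, hb, hab, h_eq⟩ :=
      exists_mem_segment_of_mem_pyramidOver hV.to_set.convexHull (hfP ▸ Set.mem_image_of_mem f hy)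
    have h_last : f y (Fin.last m) = b := by simp [← h_eq, hp]
    refine ⟨?_, fun hy1 => ?_⟩
    · simpa [h_last] using ⟨hb, by linarith⟩
    · obtain rfl : b = 1 := by simpa [h_last] using hy1
      obtain rfl : a = 0 := by linarith
      rw [← hgf y (subset_affineSpan ℝ _ hy), ← h_eq, zero_smul, one_smul, zero_add]

-- The height over the base of a pyramid is `1` at the apex and `0` at every other lattice point, so
-- the apex cannot take part in such a relation.
theorem not_isLatticePyramid_convexHull {V : Set (Fin d → ℝ)} (hV : ∀ v ∈ V, IsLatticePt v)
    (h_rel : ∀ v ∈ V, ∃ v' ∈ V, ∃ w ∈ V, ∃ w' ∈ V, w ≠ v ∧ w' ≠ v ∧ v + v' = w + w') :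
    ¬ IsLatticePyramid (convexHull ℝ V) := by
  intro hP
  obtain ⟨apex, h_apex, h, h_int, h_apex_one, hP⟩ := hP.exists_height
  have hV_sub : V ⊆ convexHull ℝ V := subset_convexHull ℝ V
  obtain ⟨v, hv, hv_ge⟩ := ((convexOn_id convex_univ).comp_affineMap h).exists_ge_of_mem_convexHull
    (Set.subset_univ V) h_apex
  have hv_one : h v = 1 := le_antisymm (hP v (hV_sub hv)).1.2 (h_apex_one ▸ hv_ge)
  have h_zero (w) (hw : w ∈ V) (hwv : w ≠ v) : h w = 0 := by
    obtain ⟨⟨hw0, hw1⟩, hw_apex⟩ := hP w (hV_sub hw)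
    have hw_ne : h w ≠ 1 := fun hw_one =>
      hwv ((hw_apex hw_one).trans ((hP v (hV_sub hv)).2 hv_one).symm)
    obtain ⟨z, hz⟩ := h_int w (subset_affineSpan ℝ _ (hV_sub hw)) (hV w hw)
    have hw_lt : h w < 1 := hw1.lt_of_ne hw_ne
    rw [hz] at hw0 hw_lt ⊢
    norm_cast at hw0 hw_lt ⊢
    lia
  obtain ⟨v', hv', w, hw, w', hw', hwv, hwv', h_eq⟩ := h_rel v hv
  have h_sub : h v - h w = h w' - h v' := by
    have h_linear := congrArg h.linear (sub_eq_sub_iff_add_eq_add.2 (h_eq.trans (add_comm w w')))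
    simpa only [← vsub_eq_sub, AffineMap.linearMap_vsub] using h_linear
  have hv'_nonneg : 0 ≤ h v' := (hP v' (hV_sub hv')).1.1
  linarith [h_zero w hw hwv, h_zero w' hw' hwv']

theorem not_isLatticePyramid_cayley_segment {n l : ℕ} {v : Fin l → Fin n → ℝ}
    (hv : ∀ i, IsLatticePt (v i)) (hv0 : ∀ i, v i ≠ 0) (h_neg : ∀ i, ∃ j, v j = -v i) :
    ¬ IsLatticePyramid (cayley fun i => segment ℝ 0 (v i)) := by
  simp only [← convexHull_pair, cayley_convexHull]
  set V := ⋃ i, (fun x => Fin.append x (Pi.single i (1 : ℝ))) '' {0, v i}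
  have h_base (i) : Fin.append 0 (Pi.single i 1) ∈ V := Set.mem_iUnion.2 ⟨i, 0, by simp⟩
  have h_top (i) : Fin.append (v i) (Pi.single i 1) ∈ V := Set.mem_iUnion.2 ⟨i, v i, by simp⟩
  have h_ne {x y : Fin n → ℝ} (hxy : x ≠ y) (c d : Fin l → ℝ) : Fin.append x c ≠ Fin.append y d :=
    (appendLinearEquiv n l).injective.ne (a₁ := (x, c)) (a₂ := (y, d)) fun h =>
      hxy (congrArg Prod.fst h)
  have h_rel {i j} (hij : v j = -v i) :
      Fin.append 0 (Pi.single i 1) + Fin.append 0 (Pi.single j 1) =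
        Fin.append (v i) (Pi.single i (1 : ℝ)) + Fin.append (v j) (Pi.single j (1 : ℝ)) := by
    have h_pair : ((0, Pi.single i 1) + (0, Pi.single j 1) : (Fin n → ℝ) × (Fin l → ℝ)) =
        (v i, Pi.single i 1) + (v j, Pi.single j 1) := by simp [hij]
    simpa only [map_add, appendLinearEquiv_apply] using congrArg (appendLinearEquiv n l) h_pair
  refine not_isLatticePyramid_convexHull (fun y hy => ?_) fun y hy => ?_
  all_goals obtain ⟨i, x, rfl | rfl, rfl⟩ := Set.mem_iUnion.1 hy
  · exact isLatticePt_append.2 ⟨isLatticePt_zero, isLatticePt_single_one i⟩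
  · exact isLatticePt_append.2 ⟨hv i, isLatticePt_single_one i⟩
  all_goals obtain ⟨j, hij⟩ := h_neg i
  · exact ⟨_, h_base j, _, h_top i, _, h_top j, h_ne (hv0 i) _ _, h_ne (hv0 j) _ _, h_rel hij⟩
  · exact ⟨_, h_top j, _, h_base i, _, h_base j, h_ne (hv0 i).symm _ _, h_ne (hv0 i).symm _ _,
      (h_rel hij).symm⟩

end Pyramid

theorem sum_image_single {ι M : Type*} [Fintype ι] [DecidableEq ι] [AddCommMonoid M]
    (S : ι → Set M) : ∑ k, Pi.single k '' S k = Set.pi Set.univ S := by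
  ext x
  rw [Set.mem_fintype_sum, Set.mem_univ_pi]
  constructor
  · rintro ⟨g, hg, rfl⟩ k
    choose a ha hag using hg
    simpa [← hag] using ha k
  · exact fun hx => ⟨fun k => Pi.single k (x k), fun k => ⟨x k, hx k, rfl⟩,
      Finset.univ_sum_single x⟩

section SegPM

variable {s : ℕ}

/-- Splits the indices of the `2s` segments into the `k`-th positive segment `conv(0, e_k)`, with
index `inl k`, and the `k`-th negative one `conv(0, -e_k)`, with index `inr k`. -/
def halves (s : ℕ) : Fin s ⊕ Fin s ≃ Fin (2 * s) :=
  finSumFinEquiv.trans (finCongr (two_mul s).symm)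

/-- The endpoint `±e_k` of the `i`-th segment; these vectors are also the facet normals of
`[-1, 1]^s`. -/
def signedUnit (i : Fin (2 * s)) : Fin s → ℝ :=
  Sum.elim (fun k => Pi.single k 1) (fun k => -Pi.single k 1) ((halves s).symm i)

@[simp]
theorem signedUnit_inl (k : Fin s) : signedUnit (halves s (.inl k)) = Pi.single k 1 := by
  simp [signedUnit]

@[simp]
theorem signedUnit_inr (k : Fin s) : signedUnit (halves s (.inr k)) = -Pi.single k 1 := by
  simp [signedUnit]

theorem forall_halves {p : Fin (2 * s) → Prop} :
    (∀ i, p i) ↔ ∀ k, p (halves s (.inl k)) ∧ p (halves s (.inr k)) := by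
  rw [← (halves s).forall_congr_right, Sum.forall, forall_and]

theorem segPM_eq_segment (i : Fin (2 * s)) : segPM s i = segment ℝ 0 (signedUnit i) := by
  revert i
  refine forall_halves.2 fun k => ⟨?_, ?_⟩
  · rw [signedUnit_inl]
    simp [segPM, halves]
  · rw [signedUnit_inr]
    simp [segPM, halves]

theorem isLatticePt_signedUnit (i : Fin (2 * s)) : IsLatticePt (signedUnit i) := by
  revert i
  exact forall_halves.2 fun k => ⟨signedUnit_inl k ▸ isLatticePt_single_one k,
    signedUnit_inr k ▸ (isLatticePt_single_one k).neg⟩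

theorem convex_segPM (i : Fin (2 * s)) : Convex ℝ (segPM s i) :=
  segPM_eq_segment i ▸ convex_segment _ _

theorem segPM_nonempty (i : Fin (2 * s)) : (segPM s i).Nonempty :=
  segPM_eq_segment i ▸ ⟨0, left_mem_segment ℝ _ _⟩

theorem smul_segPM (c : ℝ) (i : Fin (2 * s)) : c • segPM s i = segment ℝ 0 (c • signedUnit i) := by
  have h_image := image_segment ℝ (c • AffineMap.id ℝ (Fin s → ℝ)) 0 (signedUnit i)
  simpa [segPM_eq_segment, ← Set.image_smul] using h_image

theorem segment_zero_single (k : Fin s) (b : ℝ) :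
    segment ℝ 0 (Pi.single k b : Fin s → ℝ) = Pi.single k '' segment ℝ 0 b := by
  simpa using (image_segment ℝ (LinearMap.single ℝ (fun _ : Fin s => ℝ) k).toAffineMap 0 b).symm

theorem smul_segPM_inl {c : ℝ} (hc : 0 ≤ c) (k : Fin s) :
    c • segPM s (halves s (.inl k)) = Pi.single k '' Set.Icc 0 c := by
  rw [smul_segPM, signedUnit_inl, ← Pi.single_smul, smul_eq_mul, mul_one, segment_zero_single,
    segment_eq_Icc hc]

theorem smul_segPM_inr {c : ℝ} (hc : 0 ≤ c) (k : Fin s) :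
    c • segPM s (halves s (.inr k)) = Pi.single k '' Set.Icc (-c) 0 := by
  rw [smul_segPM, signedUnit_inr, ← Pi.single_neg, ← Pi.single_smul, smul_eq_mul, mul_neg_one,
    segment_zero_single, segment_symm, segment_eq_Icc (neg_nonpos.2 hc)]

theorem sum_smul_segPM {c : Fin (2 * s) → ℝ} (hc : ∀ i, 0 ≤ c i) :
    ∑ i, c i • segPM s i =
      Set.pi Set.univ fun k => Set.Icc (-c (halves s (.inr k))) (c (halves s (.inl k))) := by
  have h_pair (k : Fin s) :
      c (halves s (.inl k)) • segPM s (halves s (.inl k)) +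
        c (halves s (.inr k)) • segPM s (halves s (.inr k)) =
      Pi.single k '' Set.Icc (-c (halves s (.inr k))) (c (halves s (.inl k))) := by
    rw [smul_segPM_inl (hc _), smul_segPM_inr (hc _), add_comm]
    refine (Set.image_add (AddMonoidHom.single (fun _ : Fin s => ℝ) k)).symm.trans ?_
    rw [Set.Icc_add_Icc (neg_nonpos.2 (hc _)) (hc _), add_zero, zero_add]
    rfl
  rw [← (halves s).sum_comp, Fintype.sum_sum_type, ← Finset.sum_add_distrib,
    Finset.sum_congr rfl fun k _ => h_pair k, sum_image_single]

theorem mem_sum_smul_segPM {c : Fin (2 * s) → ℝ} (hc : ∀ i, 0 ≤ c i) {x : Fin s → ℝ} :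
    x ∈ ∑ i, c i • segPM s i ↔ ∀ i, signedUnit i ⬝ᵥ x ≤ c i := by
  rw [sum_smul_segPM hc, Set.mem_univ_pi, forall_halves]
  refine forall_congr' fun k => ?_
  simp [and_comm, neg_le]

theorem sum_segPM :
    ∑ i, segPM s i = Set.pi Set.univ fun _ : Fin s => Set.Icc (-1 : ℝ) 1 := by
  simpa using sum_smul_segPM (s := s) (c := 1) fun _ => zero_le_one

theorem isReflexivePolytope_sum_segPM : IsReflexivePolytope (∑ i, segPM s i) := by
  have h_eq : ∑ i, segPM s i = polyhedron ⊤ fun i : Fin (2 * s) =>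
      AffineMap.const ℝ _ 1 - (dotProductBilin ℝ ℝ (signedUnit i)).toAffineMap := by
    ext x
    simpa [polyhedron] using mem_sum_smul_segPM (c := 1) (x := x) fun _ => zero_le_one
  rw [h_eq]
  refine isReflexivePolytope_polyhedron (x := 0) trivial isLatticePt_zero (by simp)
    fun i y _ hy => ?_
  obtain ⟨z, hz⟩ := (isLatticePt_signedUnit i).exists_int_eq_dotProduct hy
  exact ⟨1 - z, by simp [hz]⟩

/-- The facet functionals of `cayley (segPM s)`, in terms of the splitting `y = (x, c)`: the
coordinates `c i` and the differences `c i - v i ⬝ x`, where `v i` is the endpoint of the `i`-th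
segment. -/
def cayleyFacet (s : ℕ) : Fin (2 * s) ⊕ Fin (2 * s) → (Fin (s + 2 * s) → ℝ) →ₗ[ℝ] ℝ :=
  Sum.elim (fun i => LinearMap.proj (Fin.natAdd s i)) fun i =>
    LinearMap.proj (Fin.natAdd s i) -
      dotProductBilin ℝ ℝ (signedUnit i) ∘ₗ LinearMap.funLeft ℝ ℝ (Fin.castAdd (2 * s))

@[simp]
theorem cayleyFacet_inl_append (x : Fin s → ℝ) (c : Fin (2 * s) → ℝ) (i : Fin (2 * s)) :
    cayleyFacet s (.inl i) (Fin.append x c) = c i := by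
  simp [cayleyFacet]

@[simp]
theorem cayleyFacet_inr_append (x : Fin s → ℝ) (c : Fin (2 * s) → ℝ) (i : Fin (2 * s)) :
    cayleyFacet s (.inr i) (Fin.append x c) = c i - signedUnit i ⬝ᵥ x := by
  have h_left : LinearMap.funLeft ℝ ℝ (Fin.castAdd (2 * s)) (Fin.append x c) = x := by
    ext k
    simp [LinearMap.funLeft_apply]
  simp [cayleyFacet, h_left]

theorem IsLatticePt.exists_int_eq_cayleyFacet {y : Fin (s + 2 * s) → ℝ} (hy : IsLatticePt y)
    (j : Fin (2 * s) ⊕ Fin (2 * s)) : ∃ z : ℤ, cayleyFacet s j y = z := by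
  obtain ⟨⟨x, c⟩, rfl⟩ := (appendLinearEquiv s (2 * s)).surjective y
  simp only [appendLinearEquiv_apply] at hy ⊢
  obtain ⟨hx, hc⟩ := isLatticePt_append.1 hy
  rcases j with i | i
  · simpa using hc i
  · obtain ⟨a, ha⟩ := hc i
    obtain ⟨b, hb⟩ := (isLatticePt_signedUnit i).exists_int_eq_dotProduct hx
    exact ⟨a - b, by simp [ha, hb]⟩

theorem smul_cayley_segPM (hs : 0 < s) :
    ((2 * s : ℕ) : ℝ) • cayley (segPM s) =
      polyhedron (AffineSubspace.mk' (Fin.append 0 1) (LinearMap.ker (cayleyHeight s (2 * s))))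
        fun j => (cayleyFacet s j).toAffineMap := by
  ext y
  obtain ⟨⟨x, c⟩, rfl⟩ := (appendLinearEquiv s (2 * s)).surjective y
  have h_pos : (0 : ℝ) < (2 * s : ℕ) := by exact_mod_cast Nat.mul_pos two_pos hs
  have h_facet : (∀ j, 0 ≤ cayleyFacet s j (Fin.append x c)) ↔
      (∀ i, 0 ≤ c i) ∧ x ∈ ∑ i, c i • segPM s i := by
    rw [Sum.forall]
    simpa using fun hc => (mem_sum_smul_segPM hc).symm
  have h_height : Fin.append x c ∈
      AffineSubspace.mk' (Fin.append 0 1) (LinearMap.ker (cayleyHeight s (2 * s))) ↔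
      ∑ i, c i = (2 * s : ℕ) := by
    simp [sub_eq_zero]
  rw [appendLinearEquiv_apply, append_mem_smul_cayley convex_segPM segPM_nonempty h_pos]
  exact and_left_comm.trans (and_congr h_height.symm h_facet.symm)

theorem isGorensteinOfCodeg_cayley_segPM (hs : 0 < s) :
    IsGorensteinOfCodeg (cayley (segPM s)) (2 * s) := by
  refine ⟨by lia, ?_⟩
  rw [smul_cayley_segPM hs]
  refine isReflexivePolytope_polyhedron (AffineSubspace.self_mem_mk' _ _)
    (isLatticePt_append.2 ⟨isLatticePt_zero, isLatticePt_one⟩) ?_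
      fun j y _ hy => hy.exists_int_eq_cayleyFacet j
  simp

theorem polyDim_cayley_segPM (hs : 0 < s) : polyDim (cayley (segPM s)) = 3 * s - 1 := by
  have h_ne : ((2 * s : ℕ) : ℝ) ≠ 0 := by exact_mod_cast (Nat.mul_pos two_pos hs).ne'
  rw [← polyDim_smul h_ne, smul_cayley_segPM hs,
    polyDim_polyhedron (AffineSubspace.self_mem_mk' _ _) (by simp),
    AffineSubspace.direction_mk', finrank_ker_cayleyHeight (by lia)]
  lia

theorem polyCodeg_cayley_segPM (hs : 0 < s) : polyCodeg (cayley (segPM s)) = 2 * s :=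
  polyCodeg_cayley convex_segPM segPM_nonempty (isGorensteinOfCodeg_cayley_segPM hs)

theorem not_isLatticePyramid_cayley_segPM : ¬ IsLatticePyramid (cayley (segPM s)) := by
  have h_eq : segPM s = fun i => segment ℝ 0 (signedUnit i) := funext segPM_eq_segment
  rw [h_eq]
  refine not_isLatticePyramid_cayley_segment isLatticePt_signedUnit
    (forall_halves.2 fun k => by simp) (forall_halves.2 fun k => ⟨?_, ?_⟩)
  · exact ⟨halves s (.inr k), by simp⟩
  · exact ⟨halves s (.inl k), by simp⟩

end SegPM

/-- For `s ≥ 1` and the segments `P_i = conv(0, e_i)`, `P_{s+i} = conv(0, -e_i)` in `ℝ^s`: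
their Minkowski sum is `[-1,1]^s`, which is reflexive, and their Cayley polytope is a
Gorenstein polytope of dimension `3s - 1` and degree `s` that is not a lattice pyramid. -/
theorem stmt7 (s : ℕ) (hs : 1 ≤ s) :
    (∑ i, segPM s i) = Set.pi Set.univ (fun _ : Fin s => Set.Icc (-1 : ℝ) 1) ∧
    IsReflexivePolytope (∑ i, segPM s i) ∧
    IsGorenstein (cayley (segPM s)) ∧
    polyDim (cayley (segPM s)) = 3 * s - 1 ∧
    polyDeg (cayley (segPM s)) = s ∧
    ¬ IsLatticePyramid (cayley (segPM s)) := by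
  have h_deg : polyDeg (cayley (segPM s)) = s := by
    rw [polyDeg, polyDim_cayley_segPM hs, polyCodeg_cayley_segPM hs]
    lia
  exact ⟨sum_segPM, isReflexivePolytope_sum_segPM, ⟨2 * s, isGorensteinOfCodeg_cayley_segPM hs⟩,
    polyDim_cayley_segPM hs, h_deg, not_isLatticePyramid_cayley_segPM⟩
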